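/- arXiv:math/0502547 — 2 statements merged into one kernel-verified Lean document; each statement's English description precedes it below -/
import Mathlib

section
/- For every element α of the submodule J_n ⊆ Θ_n generated by Jacobi combinations and symmetry combinations of Trees, and every β ∈ Γ_n, the configuration pairing vanishes: ⟨β, α⟩ = 0. -/
open scoped Classical

noncomputable section

namespace GTPairing

/-- Planar binary trees with natural-number-labeled leaves.  A `PTree` is a rooted
binary (trivalent) tree embedded in the upper half plane; `node l r` has `l` as its
left branch and `r` as its right branch. -/
inductive PTree : Type
  | leaf (a : ℕ) : PTree
  | node (l r : PTree) : PTree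
  deriving DecidableEq

namespace PTree

/-- The labels of the leaves, in planar (left-to-right) order. -/
def leaves : PTree → List ℕ
  | .leaf a => [a]
  | .node l r => l.leaves ++ r.leaves

/-- The internal (trivalent) vertices of a planar tree, recorded as the subtrees they
support, listed in the left-to-right (in-order) planar order. -/
def nodesList : PTree → List PTree
  | .leaf _ => []
  | .node l r => l.nodesList ++ (PTree.node l r :: r.nodesList)

/-- `nadir t i j` is the nadir (lowest vertex) of the shortest path in `t` between the
leaves labeled `i` and `j`, recorded as the subtree it supports, together with `true`
if the leaf labeled `i` lies over the left branch of the nadir (and `j` over the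
right), i.e. if the path travels from left to right at its nadir. -/
def nadir : PTree → ℕ → ℕ → Option (PTree × Bool)
  | .leaf _, _, _ => none
  | .node l r, i, j =>
    if i ∈ l.leaves ∧ j ∈ r.leaves then some (.node l r, true)
    else if j ∈ l.leaves ∧ i ∈ r.leaves then some (.node l r, false)
    else if i ∈ l.leaves ∧ j ∈ l.leaves then nadir l i j
    else if i ∈ r.leaves ∧ j ∈ r.leaves then nadir r i j
    else none

/-- Fusing: `graft t m s` identifies the root edge of `s` with the leaf edge of `t`
labeled by `m`, i.e. substitutes `s` for the leaf labeled `m`. -/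
def graft : PTree → ℕ → PTree → PTree
  | .leaf a, m, s => if a = m then s else .leaf a
  | .node l r, m, s => .node (l.graft m s) (r.graft m s)

/-- Relabel the leaves of a tree. -/
def relabel (f : ℕ → ℕ) : PTree → PTree
  | .leaf a => .leaf (f a)
  | .node l r => .node (l.relabel f) (r.relabel f)

end PTree

/-- The nadir of the path between the two endpoints of an edge, forgetting planar
direction data. -/
def nadirFst (t : PTree) (e : ℕ × ℕ) : Option PTree := (t.nadir e.1 e.2).map Prod.fst

/-- The (even) configuration pairing between a set of oriented edges `E` (a Graph) and
a planar binary tree `t` (a Tree): it is `0` unless `e ↦ β_{G,T}(e)` (sending an edge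
to the nadir of the path between the corresponding leaves) is a bijection from the
edges onto the internal vertices of `t`, in which case it is `(-1)^N` where `N` is the
number of edges `(i,j)` whose path travels from left to right (`i` over the left
branch) at its nadir. -/
def pairPT (E : Multiset (ℕ × ℕ)) (t : PTree) : ℤ :=
  if E.map (nadirFst t) = ((t.nodesList.map some : List (Option PTree)) : Multiset (Option PTree))
  then (-1) ^ (Multiset.card (E.filter (fun e => (t.nadir e.1 e.2).map Prod.snd = some true)))
  else 0

/-- A Tree with leaves labeled bijectively by the finite set `S`. -/
def IsTreeOn (S : Finset ℕ) (t : PTree) : Prop := t.leaves.Nodup ∧ t.leaves.toFinset = S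

def TreeOn (S : Finset ℕ) : Type := {t : PTree // IsTreeOn S t}

/-- Adjacency relation determined by a multiset of oriented edges. -/
def Adj (E : Multiset (ℕ × ℕ)) (a b : ℕ) : Prop := (a, b) ∈ E ∨ (b, a) ∈ E

/-- Connectivity of an edge multiset on the vertex set `S`. -/
def ConnOn (S : Finset ℕ) (E : Multiset (ℕ × ℕ)) : Prop :=
  ∀ a ∈ S, ∀ b ∈ S, Relation.ReflTransGen (Adj E) a b

/-- A Graph on the vertex set `S`: a connected graph with oriented edges (each edge
joining two distinct vertices of `S`). -/
def IsGraphOn (S : Finset ℕ) (E : Multiset (ℕ × ℕ)) : Prop :=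
  (∀ e ∈ E, e.1 ∈ S ∧ e.2 ∈ S ∧ e.1 ≠ e.2) ∧ ConnOn S E

def GraphOn (S : Finset ℕ) : Type := {E : Multiset (ℕ × ℕ) // IsGraphOn S E}

variable (R : Type) [CommRing R]

/-- `Θ_S`: the free module on Trees with leaves labeled by `S`. -/
abbrev ThetaF (S : Finset ℕ) : Type := TreeOn S →₀ R

/-- `Γ_S`: the free module on Graphs with vertices labeled by `S`. -/
abbrev GammaF (S : Finset ℕ) : Type := GraphOn S →₀ R

variable {R}

/-- The configuration pairing, extended bilinearly to the free modules. -/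
def pairGT {S : Finset ℕ} (β : GammaF R S) (α : ThetaF R S) : R :=
  β.sum fun G b => α.sum fun T a => b * a * ((pairPT G.1 T.1 : ℤ) : R)

/-- The basis element of a free module on a subtype, when the defining property holds
(and `0` otherwise; in all uses below the property does hold). -/
def bsingle {α : Type} (P : α → Prop) (a : α) : ({x : α // P x} →₀ R) :=
  if h : P a then Finsupp.single ⟨a, h⟩ (1 : R) else 0

variable (R)

/-- Jacobi combinations of Trees: the sum of the three Trees obtained from the unique
3-leaf Tree by fusing Trees `A`, `B`, `C` onto its three leaves in the three
cyclically related orders and fusing a Tree `D` onto its root (at the leaf `m` of `D`). -/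
def jacobiSet (S : Finset ℕ) : Set (ThetaF R S) :=
  { x | ∃ (D A B C : PTree) (m : ℕ) (T₁ T₂ T₃ : TreeOn S),
      D.leaves.Nodup ∧ m ∈ D.leaves ∧
      T₁.1 = D.graft m (.node (.node A B) C) ∧
      T₂.1 = D.graft m (.node (.node B C) A) ∧
      T₃.1 = D.graft m (.node (.node C A) B) ∧
      x = Finsupp.single T₁ 1 + Finsupp.single T₂ 1 + Finsupp.single T₃ 1 }

/-- Symmetry combinations of Trees: the sum of two Trees which are isomorphic as
labeled graphs and have the same planar ordering of input edges at every internal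
vertex except exactly one (here: exactly the vertex at the leaf `m` of `D`, whose two
branches `A` and `B` are switched). -/
def treeSymmSet (S : Finset ℕ) : Set (ThetaF R S) :=
  { x | ∃ (D A B : PTree) (m : ℕ) (T₁ T₂ : TreeOn S),
      D.leaves.Nodup ∧ m ∈ D.leaves ∧
      T₁.1 = D.graft m (.node A B) ∧
      T₂.1 = D.graft m (.node B A) ∧
      x = Finsupp.single T₁ 1 + Finsupp.single T₂ 1 }

/-- The submodule `J_S ⊆ Θ_S` generated by Jacobi and symmetry combinations. -/
def Jsub (S : Finset ℕ) : Submodule R (ThetaF R S) :=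
  Submodule.span R (jacobiSet R S ∪ treeSymmSet R S)

/-- Arnold combinations of Graphs: sums of three Graphs which agree except on edges
among three fixed distinct vertices `i`, `j`, `k`, where they contain respectively the
edge pairs `{i→j, j→k}`, `{j→k, k→i}` and `{k→i, i→j}`. -/
def arnoldSet (S : Finset ℕ) : Set (GammaF R S) :=
  { x | ∃ (i j k : ℕ) (E₀ : Multiset (ℕ × ℕ)) (G₁ G₂ G₃ : GraphOn S),
      i ≠ j ∧ j ≠ k ∧ i ≠ k ∧
      G₁.1 = (i, j) ::ₘ (j, k) ::ₘ E₀ ∧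
      G₂.1 = (j, k) ::ₘ (k, i) ::ₘ E₀ ∧
      G₃.1 = (k, i) ::ₘ (i, j) ::ₘ E₀ ∧
      x = Finsupp.single G₁ 1 + Finsupp.single G₂ 1 + Finsupp.single G₃ 1 }

/-- Symmetry combinations of Graphs: sums of two Graphs which differ only in the
orientation of exactly one edge. -/
def graphSymmSet (S : Finset ℕ) : Set (GammaF R S) :=
  { x | ∃ (i j : ℕ) (E₀ : Multiset (ℕ × ℕ)) (G₁ G₂ : GraphOn S),
      G₁.1 = (i, j) ::ₘ E₀ ∧ G₂.1 = (j, i) ::ₘ E₀ ∧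
      x = Finsupp.single G₁ 1 + Finsupp.single G₂ 1 }

/-- Graphs having two edges with the same pair of endpoints. -/
def doubledSet (S : Finset ℕ) : Set (GammaF R S) :=
  { x | ∃ (i j : ℕ) (E₀ : Multiset (ℕ × ℕ)) (G : GraphOn S),
      (G.1 = (i, j) ::ₘ (i, j) ::ₘ E₀ ∨ G.1 = (i, j) ::ₘ (j, i) ::ₘ E₀) ∧
      x = Finsupp.single G 1 }

/-- The submodule `I_S ⊆ Γ_S` generated by Arnold combinations, symmetry combinations
and Graphs with doubled edges. -/
def Isub (S : Finset ℕ) : Submodule R (GammaF R S) :=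
  Submodule.span R (arnoldSet R S ∪ graphSymmSet R S ∪ doubledSet R S)

/-- `Lie(S) = Θ_S / J_S`. -/
abbrev LieQ (S : Finset ℕ) : Type := ThetaF R S ⧸ Jsub R S

/-- `Eil(S) = Γ_S / I_S`. -/
abbrev EilQ (S : Finset ℕ) : Type := GammaF R S ⧸ Isub R S

end GTPairing

namespace GTPairing

/-- Edges with both ends in `L`. -/
def rs (E : Multiset (ℕ × ℕ)) (L : List ℕ) : Multiset (ℕ × ℕ) :=
  E.filter (fun e => e.1 ∈ L ∧ e.2 ∈ L)

/-- Edges contained neither in `L` nor in `M`. -/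
def cr (E : Multiset (ℕ × ℕ)) (L M : List ℕ) : Multiset (ℕ × ℕ) :=
  E.filter (fun e => ¬ (e.1 ∈ L ∧ e.2 ∈ L) ∧ ¬ (e.1 ∈ M ∧ e.2 ∈ M))

/-- The signed number of crossings. -/
def sg (E : Multiset (ℕ × ℕ)) (L M : List ℕ) : ℤ :=
  (E.countP (fun e => e.1 ∈ M ∧ e.2 ∈ L) : ℤ) - (E.countP (fun e => e.1 ∈ L ∧ e.2 ∈ M) : ℤ)

/-- The local factor of the pairing at one vertex. -/
def cf (E : Multiset (ℕ × ℕ)) (L M : List ℕ) : ℤ :=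
  if Multiset.card (cr E L M) = 1 then sg E L M else 0

theorem leaves_ne (t : PTree) : ∃ x, x ∈ t.leaves := by
  induction t with
  | leaf a => exact ⟨a, by simp [PTree.leaves]⟩
  | node l r ihl ihr => obtain ⟨x, hx⟩ := ihl; exact ⟨x, by simp [PTree.leaves, hx]⟩

theorem nodes_sub (t s : PTree) (h : s ∈ t.nodesList) : ∀ x ∈ s.leaves, x ∈ t.leaves := by
  induction t with
  | leaf a => simp [PTree.nodesList] at h
  | node l r ihl ihr =>
    simp only [PTree.nodesList, List.mem_append, List.mem_cons] at h
    intro x hx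
    rcases h with h | h | h
    · simp [PTree.leaves, ihl h x hx]
    · subst h; exact hx
    · simp [PTree.leaves, ihr h x hx]

theorem nadir_mem (t : PTree) (i j : ℕ) (p : PTree × Bool) (h : t.nadir i j = some p) :
    p.1 ∈ t.nodesList := by
  induction t with
  | leaf a => simp [PTree.nadir] at h
  | node l r ihl ihr =>
    simp only [PTree.nadir] at h
    simp only [PTree.nodesList, List.mem_append, List.mem_cons]
    split_ifs at h with h1 h2 h3 h4
    · simp at h; subst h; simp
    · simp at h; subst h; simp
    · exact Or.inl (ihl h)
    · exact Or.inr (Or.inr (ihr h))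

theorem nadirFst_mem (t : PTree) (e : ℕ × ℕ) (s : PTree) (h : nadirFst t e = some s) :
    s ∈ t.nodesList := by
  unfold nadirFst at h
  rw [Option.map_eq_some_iff] at h
  obtain ⟨p, hp, rfl⟩ := h
  exact nadir_mem t _ _ p hp

theorem E_split (E : Multiset (ℕ × ℕ)) (L M : List ℕ) (hd : ∀ x ∈ L, x ∉ M) :
    E = rs E L + rs E M + cr E L M := by
  ext x
  simp only [rs, cr, Multiset.count_add, Multiset.count_filter]
  have := hd x.1
  by_cases h1 : x.1 ∈ L ∧ x.2 ∈ L
  · have h2 : ¬ (x.1 ∈ M ∧ x.2 ∈ M) := fun h => hd _ h1.1 h.1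
    rw [if_pos h1, if_neg h2, if_neg (by tauto)]
    simp
  · by_cases h2 : x.1 ∈ M ∧ x.2 ∈ M
    · rw [if_neg h1, if_pos h2, if_neg (by tauto)]
      simp
    · rw [if_neg h1, if_neg h2, if_pos (by tauto)]
      simp

theorem three_split {α : Type} (Q1 Q2 Q3 : α → Prop) (h12 : ∀ x, Q1 x → ¬ Q2 x)
    (h13 : ∀ x, Q1 x → ¬ Q3 x) (h23 : ∀ x, Q2 x → ¬ Q3 x) (M1 M2 M3 N1 N2 N3 : Multiset α)
    (m1 : ∀ x ∈ M1, Q1 x) (m2 : ∀ x ∈ M2, Q2 x) (m3 : ∀ x ∈ M3, Q3 x)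
    (n1 : ∀ x ∈ N1, Q1 x) (n2 : ∀ x ∈ N2, Q2 x) (n3 : ∀ x ∈ N3, Q3 x)
    (h : M1 + M2 + M3 = N1 + N2 + N3) : M1 = N1 ∧ M2 = N2 ∧ M3 = N3 := by
  have key : ∀ x, M1.count x = N1.count x ∧ M2.count x = N2.count x ∧ M3.count x = N3.count x := by
    intro x
    have hx := congrArg (Multiset.count x) h
    simp only [Multiset.count_add] at hx
    have a1 : ¬ Q1 x → M1.count x = 0 ∧ N1.count x = 0 := fun q =>
      ⟨Multiset.count_eq_zero.2 fun k => q (m1 x k), Multiset.count_eq_zero.2 fun k => q (n1 x k)⟩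
    have a2 : ¬ Q2 x → M2.count x = 0 ∧ N2.count x = 0 := fun q =>
      ⟨Multiset.count_eq_zero.2 fun k => q (m2 x k), Multiset.count_eq_zero.2 fun k => q (n2 x k)⟩
    have a3 : ¬ Q3 x → M3.count x = 0 ∧ N3.count x = 0 := fun q =>
      ⟨Multiset.count_eq_zero.2 fun k => q (m3 x k), Multiset.count_eq_zero.2 fun k => q (n3 x k)⟩
    have b1 := h12 x
    have b2 := h13 x
    have b3 := h23 x
    by_cases q1 : Q1 x
    · have := a2 (b1 q1); have := a3 (b2 q1); omega
    · by_cases q2 : Q2 x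
      · have := a1 q1; have := a3 (b3 q2); omega
      · have := a1 q1; have := a2 q2; omega
  exact ⟨Multiset.ext.2 fun x => (key x).1, Multiset.ext.2 fun x => (key x).2.1,
    Multiset.ext.2 fun x => (key x).2.2⟩

theorem nadir_left (l r : PTree) (hd : ∀ x ∈ l.leaves, x ∉ r.leaves) (i j : ℕ)
    (hi : i ∈ l.leaves) (hj : j ∈ l.leaves) : (PTree.node l r).nadir i j = l.nadir i j := by
  simp [PTree.nadir, hi, hj, hd i hi, hd j hj]

theorem nadir_right (l r : PTree) (hd : ∀ x ∈ l.leaves, x ∉ r.leaves) (i j : ℕ)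
    (hi : i ∈ r.leaves) (hj : j ∈ r.leaves) : (PTree.node l r).nadir i j = r.nadir i j := by
  have h1 : i ∉ l.leaves := fun h => hd i h hi
  have h2 : j ∉ l.leaves := fun h => hd j h hj
  simp [PTree.nadir, hi, hj, h1, h2]

theorem sg_cr (E : Multiset (ℕ × ℕ)) (L M : List ℕ) (hd : ∀ x ∈ L, x ∉ M) :
    sg E L M = sg (cr E L M) L M := by
  unfold sg cr
  rw [Multiset.countP_filter, Multiset.countP_filter]
  congr 2
  · apply Multiset.countP_congr rfl
    intro e _
    have := hd e.1; have := hd e.2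
    simp only [eq_iff_iff]
    tauto
  · apply Multiset.countP_congr rfl
    intro e _
    have := hd e.1; have := hd e.2
    simp only [eq_iff_iff]
    tauto

theorem cf_eq (E : Multiset (ℕ × ℕ)) (l r : PTree) (hd : ∀ x ∈ l.leaves, x ∉ r.leaves) :
    cf E l.leaves r.leaves =
    if (cr E l.leaves r.leaves).map (nadirFst (.node l r)) = {some (.node l r)} then
      (-1) ^ (Multiset.card ((cr E l.leaves r.leaves).filter
        (fun e => ((PTree.node l r).nadir e.1 e.2).map Prod.snd = some true)))
    else 0 := by
  unfold cf
  rw [sg_cr E _ _ hd]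
  have hF : ∀ e ∈ cr E l.leaves r.leaves, ¬ (e.1 ∈ l.leaves ∧ e.2 ∈ l.leaves) ∧
    ¬ (e.1 ∈ r.leaves ∧ e.2 ∈ r.leaves) := fun e he => (Multiset.mem_filter.1 he).2
  generalize cr E l.leaves r.leaves = F at hF
  by_cases hc : Multiset.card F = 1
  · obtain ⟨⟨i, j⟩, rfl⟩ := Multiset.card_eq_one.1 hc
    have := hF (i, j) (by simp)
    simp only at this
    have d1 := hd i
    have d2 := hd j
    by_cases h1 : i ∈ l.leaves ∧ j ∈ r.leaves
    · have h3 : ¬ (j ∈ l.leaves ∧ i ∈ r.leaves) := by tauto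
      have h3' : ¬ (i ∈ r.leaves ∧ j ∈ l.leaves) := by tauto
      have hn : (PTree.node l r).nadir i j = some (.node l r, true) := by
        simp only [PTree.nadir, if_pos h1]
      simp [sg, nadirFst, hn, ← Multiset.cons_zero, Multiset.countP_cons, h1, h3', Multiset.filter_cons]
    · by_cases h2 : j ∈ l.leaves ∧ i ∈ r.leaves
      · have hn : (PTree.node l r).nadir i j = some (.node l r, false) := by
          simp only [PTree.nadir, if_neg h1, if_pos h2]
        simp [sg, nadirFst, hn, ← Multiset.cons_zero, Multiset.countP_cons, h1, h2, Multiset.filter_cons]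
      · have hn : (PTree.node l r).nadir i j = none := by
          simp only [PTree.nadir, if_neg h1, if_neg h2, if_neg this.1, if_neg this.2]
        have h2' : ¬ (i ∈ r.leaves ∧ j ∈ l.leaves) := by tauto
        simp [sg, nadirFst, hn, ← Multiset.cons_zero, Multiset.countP_cons, h1, h2']
  · rw [if_neg hc, if_neg]
    intro h
    apply hc
    have := congrArg Multiset.card h
    simpa using this

theorem cr_nadir (E : Multiset (ℕ × ℕ)) (l r : PTree) (e : ℕ × ℕ)
    (he : e ∈ cr E l.leaves r.leaves) (s : PTree) (h : nadirFst (.node l r) e = some s) :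
    s = .node l r := by
  have := (Multiset.mem_filter.1 he).2
  unfold nadirFst at h
  rw [PTree.nadir, if_neg this.1, if_neg this.2] at h
  split_ifs at h <;> simp at h <;> exact h.symm

theorem pair_node (E : Multiset (ℕ × ℕ)) (l r : PTree) (hd : ∀ x ∈ l.leaves, x ∉ r.leaves) :
    pairPT E (.node l r) = cf E l.leaves r.leaves * pairPT (rs E l.leaves) l *
      pairPT (rs E r.leaves) r := by
  rw [cf_eq E l r hd]
  unfold pairPT
  have hE := E_split E l.leaves r.leaves hd
  have mL : (rs E l.leaves).map (nadirFst (.node l r)) = (rs E l.leaves).map (nadirFst l) := by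
    apply Multiset.map_congr rfl
    intro e he
    have := (Multiset.mem_filter.1 he).2
    rw [nadirFst, nadir_left l r hd _ _ this.1 this.2, nadirFst]
  have mR : (rs E r.leaves).map (nadirFst (.node l r)) = (rs E r.leaves).map (nadirFst r) := by
    apply Multiset.map_congr rfl
    intro e he
    have := (Multiset.mem_filter.1 he).2
    rw [nadirFst, nadir_right l r hd _ _ this.1 this.2, nadirFst]
  have fL : (rs E l.leaves).filter
        (fun e => ((PTree.node l r).nadir e.1 e.2).map Prod.snd = some true) =
      (rs E l.leaves).filter (fun e => (l.nadir e.1 e.2).map Prod.snd = some true) := by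
    apply Multiset.filter_congr
    intro e he
    have := (Multiset.mem_filter.1 he).2
    rw [nadir_left l r hd _ _ this.1 this.2]
  have fR : (rs E r.leaves).filter
        (fun e => ((PTree.node l r).nadir e.1 e.2).map Prod.snd = some true) =
      (rs E r.leaves).filter (fun e => (r.nadir e.1 e.2).map Prod.snd = some true) := by
    apply Multiset.filter_congr
    intro e he
    have := (Multiset.mem_filter.1 he).2
    rw [nadir_right l r hd _ _ this.1 this.2]
  have hF := cr_nadir E l r
  have eN : (((PTree.node l r).nodesList.map some : List (Option PTree)) : Multiset (Option PTree))
      = ((l.nodesList.map some : List (Option PTree)) : Multiset (Option PTree)) +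
        ((r.nodesList.map some : List (Option PTree)) : Multiset (Option PTree)) +
        {some (.node l r)} := by
    simp only [PTree.nodesList, List.map_append, List.map_cons]
    rw [← Multiset.coe_add, ← Multiset.cons_coe, ← Multiset.singleton_add]
    abel
  rw [eN]
  generalize rs E l.leaves = EL at *
  generalize rs E r.leaves = ER at *
  generalize cr E l.leaves r.leaves = F at *
  subst hE
  rw [Multiset.map_add, Multiset.map_add, Multiset.filter_add, Multiset.filter_add, mL, mR, fL, fR,
    Multiset.card_add, Multiset.card_add, pow_add, pow_add]
  by_cases h : EL.map (nadirFst l) = ((l.nodesList.map some : List (Option PTree)) : Multiset (Option PTree))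
    ∧ ER.map (nadirFst r) = ((r.nodesList.map some : List (Option PTree)) : Multiset (Option PTree))
    ∧ F.map (nadirFst (.node l r)) = {some (.node l r)}
  · obtain ⟨h1, h2, h3⟩ := h
    rw [h1, h2, h3]
    simp only [if_true]
    ring
  · rw [if_neg]
    · by_cases h1 : EL.map (nadirFst l) = ((l.nodesList.map some : List (Option PTree)) : Multiset (Option PTree))
      · by_cases h2 : ER.map (nadirFst r) = ((r.nodesList.map some : List (Option PTree)) : Multiset (Option PTree))
        · rw [if_neg (c := F.map _ = _) (fun h3 => h ⟨h1, h2, h3⟩)]; simp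
        · rw [if_neg h2]; simp
      · rw [if_neg h1]; simp
    · intro heq
      apply h
      have nn : none ∉ EL.map (nadirFst l) + ER.map (nadirFst r) + F.map (nadirFst (.node l r)) := by
        rw [heq]; simp
      have hl0 : ∀ s : PTree, (∀ x ∈ s.leaves, x ∈ l.leaves) → (∀ x ∈ s.leaves, x ∈ r.leaves) →
          False := by
        intro s a b
        obtain ⟨x, hx⟩ := leaves_ne s
        exact hd x (a x hx) (b x hx)
      refine three_split (fun o => ∃ s, o = some s ∧ ∀ x ∈ s.leaves, x ∈ l.leaves)
        (fun o => ∃ s, o = some s ∧ ∀ x ∈ s.leaves, x ∈ r.leaves)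
        (fun o => o = some (.node l r)) ?_ ?_ ?_ _ _ _ _ _ _ ?_ ?_ ?_ ?_ ?_ ?_ heq
      · rintro _ ⟨s, rfl, hs⟩ ⟨s', h', hs'⟩
        cases h'
        exact hl0 s hs hs'
      · rintro _ ⟨s, rfl, hs⟩ h'
        cases h'
        exact hl0 r (fun x hx => hs x (by simp [PTree.leaves, hx])) (fun x hx => hx)
      · rintro _ ⟨s, rfl, hs⟩ h'
        cases h'
        exact hl0 l (fun x hx => hx) (fun x hx => hs x (by simp [PTree.leaves, hx]))
      · intro o ho
        cases o with
        | none => exact absurd (by simp only [Multiset.mem_add]; tauto) nn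
        | some s =>
          obtain ⟨e, he, hes⟩ := Multiset.mem_map.1 ho
          exact ⟨s, rfl, nodes_sub l s (nadirFst_mem l e s hes)⟩
      · intro o ho
        cases o with
        | none => exact absurd (by simp only [Multiset.mem_add]; tauto) nn
        | some s =>
          obtain ⟨e, he, hes⟩ := Multiset.mem_map.1 ho
          exact ⟨s, rfl, nodes_sub r s (nadirFst_mem r e s hes)⟩
      · intro o ho
        cases o with
        | none => exact absurd (by simp only [Multiset.mem_add]; tauto) nn
        | some s =>
          obtain ⟨e, he, hes⟩ := Multiset.mem_map.1 ho
          rw [hF e he s hes]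
      · intro o ho
        simp only [Multiset.mem_coe, List.mem_map] at ho
        obtain ⟨s, hs, rfl⟩ := ho
        exact ⟨s, rfl, nodes_sub l s hs⟩
      · intro o ho
        simp only [Multiset.mem_coe, List.mem_map] at ho
        obtain ⟨s, hs, rfl⟩ := ho
        exact ⟨s, rfl, nodes_sub r s hs⟩
      · intro o ho
        simpa using ho

theorem graft_of_not_mem (D s : PTree) (m : ℕ) (h : m ∉ D.leaves) : D.graft m s = D := by
  induction D with
  | leaf a => simp [PTree.leaves] at h; simp [PTree.graft, Ne.symm h]
  | node l r ihl ihr =>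
    simp [PTree.leaves] at h
    simp [PTree.graft, ihl h.1, ihr h.2]

theorem graft_mem_congr (D s s' : PTree) (m : ℕ) (h : ∀ x, x ∈ s.leaves ↔ x ∈ s'.leaves) (x : ℕ) :
    x ∈ (D.graft m s).leaves ↔ x ∈ (D.graft m s').leaves := by
  induction D with
  | leaf a => unfold PTree.graft; split_ifs <;> simp [h]
  | node l r ihl ihr => simp [PTree.graft, PTree.leaves, ihl, ihr]

theorem nodup_of_graft (D s : PTree) (m : ℕ) (hm : m ∈ D.leaves)
    (h : (D.graft m s).leaves.Nodup) : s.leaves.Nodup := by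
  induction D with
  | leaf a => simp [PTree.leaves] at hm; simpa [PTree.graft, hm] using h
  | node l r ihl ihr =>
    simp only [PTree.graft, PTree.leaves, List.nodup_append, List.mem_append] at h hm
    rcases hm with hm | hm
    · exact ihl hm h.1
    · exact ihr hm h.2.1

theorem rs_congr (E : Multiset (ℕ × ℕ)) (L L' : List ℕ) (h : ∀ x, x ∈ L ↔ x ∈ L') :
    rs E L = rs E L' := by
  unfold rs; simp only [h]

theorem cf_congr (E : Multiset (ℕ × ℕ)) (L L' M M' : List ℕ) (h : ∀ x, x ∈ L ↔ x ∈ L')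
    (h' : ∀ x, x ∈ M ↔ x ∈ M') : cf E L M = cf E L' M' := by
  unfold cf sg cr; simp only [h, h']

theorem disj_of_nodup {l r : PTree} (h : (PTree.node l r).leaves.Nodup) :
    l.leaves.Nodup ∧ r.leaves.Nodup ∧ ∀ x ∈ l.leaves, x ∉ r.leaves := by
  simp only [PTree.leaves, List.nodup_append] at h
  exact ⟨h.1, h.2.1, fun x hx hx' => h.2.2 x hx x hx' rfl⟩

theorem graft_linear (a₁ a₂ a₃ : ℤ) (s₁ s₂ s₃ : PTree) (m : ℕ)
    (h2 : ∀ x, x ∈ s₂.leaves ↔ x ∈ s₁.leaves) (h3 : ∀ x, x ∈ s₃.leaves ↔ x ∈ s₁.leaves)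
    (hs : ∀ E, a₁ * pairPT E s₁ + a₂ * pairPT E s₂ + a₃ * pairPT E s₃ = 0) (D : PTree)
    (hD : D.leaves.Nodup) (hm : m ∈ D.leaves) (n1 : (D.graft m s₁).leaves.Nodup)
    (n2 : (D.graft m s₂).leaves.Nodup) (n3 : (D.graft m s₃).leaves.Nodup) (E : Multiset (ℕ × ℕ)) :
    a₁ * pairPT E (D.graft m s₁) + a₂ * pairPT E (D.graft m s₂) +
      a₃ * pairPT E (D.graft m s₃) = 0 := by
  induction D generalizing E with
  | leaf a =>
    simp [PTree.leaves] at hm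
    simpa [PTree.graft, hm] using hs E
  | node l r ihl ihr =>
    obtain ⟨dl, dr, dd⟩ := disj_of_nodup hD
    simp only [PTree.graft] at n1 n2 n3 ⊢
    obtain ⟨l1, r1, d1⟩ := disj_of_nodup n1
    obtain ⟨l2, r2, d2⟩ := disj_of_nodup n2
    obtain ⟨l3, r3, d3⟩ := disj_of_nodup n3
    rw [pair_node _ _ _ d1, pair_node _ _ _ d2, pair_node _ _ _ d3]
    rw [cf_congr E _ _ _ _ (graft_mem_congr l s₂ s₁ m h2) (graft_mem_congr r s₂ s₁ m h2),
      cf_congr E _ _ _ _ (graft_mem_congr l s₃ s₁ m h3) (graft_mem_congr r s₃ s₁ m h3),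
      rs_congr E _ _ (graft_mem_congr l s₂ s₁ m h2), rs_congr E _ _ (graft_mem_congr r s₂ s₁ m h2),
      rs_congr E _ _ (graft_mem_congr l s₃ s₁ m h3), rs_congr E _ _ (graft_mem_congr r s₃ s₁ m h3)]
    simp only [PTree.leaves, List.mem_append] at hm
    by_cases hl : m ∈ l.leaves
    · have hr := dd m hl
      have := ihl dl hl l1 l2 l3 (rs E (l.graft m s₁).leaves)
      simp only [graft_of_not_mem r _ m hr]
      linear_combination (cf E (l.graft m s₁).leaves r.leaves * pairPT (rs E r.leaves) r) * this
    · have hr : m ∈ r.leaves := by tauto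
      have := ihr dr hr r1 r2 r3 (rs E (r.graft m s₁).leaves)
      simp only [graft_of_not_mem l _ m hl]
      linear_combination (cf E l.leaves (r.graft m s₁).leaves * pairPT (rs E l.leaves) l) * this

theorem cf_symm (E : Multiset (ℕ × ℕ)) (L M : List ℕ) : cf E M L = - cf E L M := by
  have : cr E M L = cr E L M := by
    unfold cr; apply Multiset.filter_congr; intro e _; tauto
  unfold cf
  rw [this]
  split_ifs
  · unfold sg; ring
  · simp

theorem pair_symm (A B : PTree) (h : (PTree.node A B).leaves.Nodup) (E : Multiset (ℕ × ℕ)) :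
    pairPT E (.node B A) = - pairPT E (.node A B) := by
  obtain ⟨-, -, d⟩ := disj_of_nodup h
  rw [pair_node _ _ _ d, pair_node _ _ _ (fun x h h' => d x h' h), cf_symm]
  ring

theorem rs_rs (E : Multiset (ℕ × ℕ)) (L M : List ℕ) (h : ∀ x ∈ M, x ∈ L) :
    rs (rs E L) M = rs E M := by
  unfold rs
  rw [Multiset.filter_filter]
  apply Multiset.filter_congr
  intro e _
  have := h e.1; have := h e.2
  tauto

/-- number of edges between `L` and `M` (for disjoint lists). -/
def nb (E : Multiset (ℕ × ℕ)) (L M : List ℕ) : ℕ :=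
  E.countP (fun e => (e.1 ∈ L ∧ e.2 ∈ M) ∨ (e.1 ∈ M ∧ e.2 ∈ L))

theorem nb_symm (E : Multiset (ℕ × ℕ)) (L M : List ℕ) : nb E L M = nb E M L := by
  unfold nb; apply Multiset.countP_congr rfl; intro e _; simp only [eq_iff_iff]; tauto

theorem sg_symm (E : Multiset (ℕ × ℕ)) (L M : List ℕ) : sg E L M = - sg E M L := by
  unfold sg; ring

theorem sg_zero (E : Multiset (ℕ × ℕ)) (L M : List ℕ) (h : nb E L M = 0) : sg E L M = 0 := by
  unfold nb at h
  rw [Multiset.countP_eq_zero] at h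
  unfold sg
  rw [Multiset.countP_eq_zero.2, Multiset.countP_eq_zero.2]
  · simp
  · intro e he; have := h e he; tauto
  · intro e he; have := h e he; tauto

/-- number of edges not inside the union of the three. -/
def nw (E : Multiset (ℕ × ℕ)) (A B C : List ℕ) : ℕ :=
  E.countP (fun e => ¬ ((e.1 ∈ A ∨ e.1 ∈ B ∨ e.1 ∈ C) ∧ (e.2 ∈ A ∨ e.2 ∈ B ∨ e.2 ∈ C)))

theorem nw_cyc (E : Multiset (ℕ × ℕ)) (A B C : List ℕ) : nw E A B C = nw E B C A := by
  unfold nw; apply Multiset.countP_congr rfl; intro e _; simp only [eq_iff_iff]; tauto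

theorem cf_inner (E : Multiset (ℕ × ℕ)) (A B : List ℕ) (h : ∀ x ∈ A, x ∉ B) :
    cf (rs E (A ++ B)) A B = if nb E A B = 1 then sg E A B else 0 := by
  have h1 : Multiset.card (cr (rs E (A ++ B)) A B) = nb E A B := by
    unfold cr rs nb
    rw [← Multiset.countP_eq_card_filter, Multiset.countP_filter]
    apply Multiset.countP_congr rfl; intro e _
    have := h e.1; have := h e.2
    simp only [eq_iff_iff, List.mem_append]; tauto
  have h2 : sg (rs E (A ++ B)) A B = sg E A B := by
    unfold sg rs
    rw [Multiset.countP_filter, Multiset.countP_filter]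
    congr 2 <;>
    · apply Multiset.countP_congr rfl; intro e _
      simp only [eq_iff_iff, List.mem_append]; tauto
  unfold cf; rw [h1, h2]

theorem countP_split (E : Multiset (ℕ × ℕ)) (p q r : ℕ × ℕ → Prop) [DecidablePred p]
    [DecidablePred q] [DecidablePred r] (h : ∀ x, p x ↔ q x ∨ r x) (h' : ∀ x, q x → ¬ r x) :
    E.countP p = E.countP q + E.countP r := by
  induction E using Multiset.induction_on with
  | empty => simp
  | cons e E ih =>
    rw [Multiset.countP_cons, Multiset.countP_cons, Multiset.countP_cons, ih]
    have h1 := h e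
    have h2 := h' e
    by_cases hq : q e
    · rw [if_pos hq, if_neg (h2 hq), if_pos (h1.2 (Or.inl hq))]; omega
    · by_cases hr : r e
      · rw [if_neg hq, if_pos hr, if_pos (h1.2 (Or.inr hr))]; omega
      · rw [if_neg hq, if_neg hr, if_neg (by tauto)]; omega

theorem cf_outer (E : Multiset (ℕ × ℕ)) (A B C : List ℕ) (h : ∀ x ∈ A, x ∉ B)
    (h' : ∀ x ∈ B, x ∉ C) (h'' : ∀ x ∈ C, x ∉ A) :
    cf E (A ++ B) C = if nb E B C + nb E C A + nw E A B C = 1 then sg E B C - sg E C A else 0 := by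
  have h1 : Multiset.card (cr E (A ++ B) C) = nb E B C + nb E C A + nw E A B C := by
    unfold cr nb nw
    rw [← Multiset.countP_eq_card_filter]
    rw [← countP_split E (fun e => ((e.1 ∈ B ∧ e.2 ∈ C) ∨ (e.1 ∈ C ∧ e.2 ∈ B)) ∨
      ((e.1 ∈ C ∧ e.2 ∈ A) ∨ (e.1 ∈ A ∧ e.2 ∈ C))) _ _ (fun _ => Iff.rfl)]
    · apply countP_split
      · intro e
        simp only [List.mem_append]
        have := h e.1; have := h e.2; have := h' e.1; have := h' e.2
        have := h'' e.1; have := h'' e.2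
        generalize (e.1 ∈ A) = a at *
        generalize (e.1 ∈ B) = b at *
        generalize (e.1 ∈ C) = c at *
        generalize (e.2 ∈ A) = a' at *
        generalize (e.2 ∈ B) = b' at *
        generalize (e.2 ∈ C) = c' at *
        grind
      · intro e
        tauto
    · intro e
      have := h e.1; have := h e.2
      tauto
  have h2 : sg E (A ++ B) C = sg E B C - sg E C A := by
    unfold sg
    rw [countP_split E (fun e => e.1 ∈ C ∧ e.2 ∈ A ++ B) (fun e => e.1 ∈ C ∧ e.2 ∈ A)
      (fun e => e.1 ∈ C ∧ e.2 ∈ B), countP_split E (fun e => e.1 ∈ A ++ B ∧ e.2 ∈ C)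
      (fun e => e.1 ∈ A ∧ e.2 ∈ C) (fun e => e.1 ∈ B ∧ e.2 ∈ C)]
    · push_cast; ring
    · intro e; simp only [List.mem_append]; tauto
    · intro e; have := h e.1; tauto
    · intro e; simp only [List.mem_append]; tauto
    · intro e; have := h e.2; tauto
  unfold cf; rw [h1, h2]

theorem scalar_jacobi (x y z w : ℕ) (p q r : ℤ) (hx : x = 0 → p = 0) (hy : y = 0 → q = 0)
    (hz : z = 0 → r = 0) :
    (if y + z + w = 1 then q - r else 0) * (if x = 1 then p else 0) +
    (if z + x + w = 1 then r - p else 0) * (if y = 1 then q else 0) +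
    (if x + y + w = 1 then p - q else 0) * (if z = 1 then r else 0) = 0 := by
  by_cases x0 : x = 0
  · have := hx x0
    subst x0 this
    simp
    by_cases y0 : y = 0
    · have := hy y0; subst y0 this; simp
    · by_cases z0 : z = 0
      · have := hz z0; subst z0 this; simp
      · split_ifs <;> first | omega | ring1
  · by_cases y0 : y = 0
    · have := hy y0
      subst y0 this
      simp
      by_cases z0 : z = 0
      · have := hz z0; subst z0 this; simp
      · split_ifs <;> first | omega | ring1
    · by_cases z0 : z = 0
      · have := hz z0
        subst z0 this
        simp
        split_ifs <;> first | omega | ring1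
      · split_ifs <;> first | omega | ring1

theorem pair_three (A B C : PTree) (E : Multiset (ℕ × ℕ))
    (h : ∀ x ∈ A.leaves, x ∉ B.leaves) (h' : ∀ x ∈ B.leaves, x ∉ C.leaves)
    (h'' : ∀ x ∈ C.leaves, x ∉ A.leaves) :
    pairPT E (.node (.node A B) C) =
    ((if nb E B.leaves C.leaves + nb E C.leaves A.leaves + nw E A.leaves B.leaves C.leaves = 1
        then sg E B.leaves C.leaves - sg E C.leaves A.leaves else 0) *
      (if nb E A.leaves B.leaves = 1 then sg E A.leaves B.leaves else 0)) *
    (pairPT (rs E A.leaves) A * pairPT (rs E B.leaves) B * pairPT (rs E C.leaves) C) := by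
  rw [pair_node, pair_node _ _ _ h]
  · simp only [PTree.leaves]
    rw [cf_inner _ _ _ h, cf_outer _ _ _ _ h h' h'', rs_rs, rs_rs]
    · ring
    · intro x hx; simp [hx]
    · intro x hx; simp [hx]
  · intro x hx hx'
    simp only [PTree.leaves, List.mem_append] at hx
    rcases hx with hx | hx
    · exact h'' x hx' hx
    · exact h' x hx hx'

theorem pair_jacobi (A B C : PTree) (h : (PTree.node (.node A B) C).leaves.Nodup)
    (E : Multiset (ℕ × ℕ)) :
    pairPT E (.node (.node A B) C) + pairPT E (.node (.node B C) A) +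
      pairPT E (.node (.node C A) B) = 0 := by
  obtain ⟨h1, -, d⟩ := disj_of_nodup h
  obtain ⟨-, -, d1⟩ := disj_of_nodup h1
  have d2 : ∀ x ∈ B.leaves, x ∉ C.leaves := fun x hx => d x (by simp [PTree.leaves, hx])
  have d3 : ∀ x ∈ C.leaves, x ∉ A.leaves := fun x hx hx' => d x (by simp [PTree.leaves, hx']) hx
  rw [pair_three A B C E d1 d2 d3, pair_three B C A E d2 d3 d1, pair_three C A B E d3 d1 d2]
  rw [nw_cyc E C.leaves, nw_cyc E B.leaves, nw_cyc E C.leaves]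
  have := scalar_jacobi (nb E A.leaves B.leaves) (nb E B.leaves C.leaves) (nb E C.leaves A.leaves)
    (nw E A.leaves B.leaves C.leaves) _ _ _ (sg_zero E _ _) (sg_zero E _ _) (sg_zero E _ _)
  linear_combination
    (pairPT (rs E A.leaves) A * pairPT (rs E B.leaves) B * pairPT (rs E C.leaves) C) * this

/-- For a fixed graph, the pairing as a linear functional. -/
def pairL (R : Type) [CommRing R] {S : Finset ℕ} (G : GraphOn S) : ThetaF R S →ₗ[R] R :=
  Finsupp.lsum R fun T => (LinearMap.mulRight R ((pairPT G.1 T.1 : ℤ) : R))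

theorem pairL_single (R : Type) [CommRing R] {S : Finset ℕ} (G : GraphOn S) (T : TreeOn S) :
    pairL R G (Finsupp.single T 1) = ((pairPT G.1 T.1 : ℤ) : R) := by
  simp [pairL]

theorem pairL_J (R : Type) [CommRing R] {S : Finset ℕ} (G : GraphOn S) (α : ThetaF R S)
    (hα : α ∈ Jsub R S) : pairL R G α = 0 := by
  have : Jsub R S ≤ LinearMap.ker (pairL R G) := by
    unfold Jsub
    rw [Submodule.span_le]
    rintro x (⟨D, A, B, C, m, T₁, T₂, T₃, hD, hm, e1, e2, e3, rfl⟩ |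
      ⟨D, A, B, m, T₁, T₂, hD, hm, e1, e2, rfl⟩)
    · simp only [SetLike.mem_coe, LinearMap.mem_ker, map_add, pairL_single]
      have n1 := T₁.2.1
      have n2 := T₂.2.1
      have n3 := T₃.2.1
      rw [e1] at n1 ⊢
      rw [e2] at n2 ⊢
      rw [e3] at n3 ⊢
      have key := graft_linear 1 1 1 (.node (.node A B) C) (.node (.node B C) A)
        (.node (.node C A) B) m (by intro x; simp [PTree.leaves]; tauto)
        (by intro x; simp [PTree.leaves]; tauto)
        (fun E => by simpa using pair_jacobi A B C (nodup_of_graft D _ m hm n1) E)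
        D hD hm n1 n2 n3 G.1
      simp only [one_mul] at key
      exact_mod_cast congrArg (Int.cast : ℤ → R) key
    · simp only [SetLike.mem_coe, LinearMap.mem_ker, map_add, pairL_single]
      have n1 := T₁.2.1
      have n2 := T₂.2.1
      rw [e1] at n1 ⊢
      rw [e2] at n2 ⊢
      have key := graft_linear 1 1 0 (.node A B) (.node B A) (.node A B) m
        (by intro x; simp [PTree.leaves]; tauto) (fun x => Iff.rfl)
        (fun E => by simp [pair_symm A B (nodup_of_graft D _ m hm n1) E])
        D hD hm n1 n2 n1 G.1
      simp only [one_mul, zero_mul, add_zero] at key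
      exact_mod_cast congrArg (Int.cast : ℤ → R) key
  exact this hα

/-- the configuration pairing vanishes on the submodule `J_n ⊆ Θ_n`
generated by Jacobi combinations and symmetry combinations of Trees. -/
theorem pairing_vanishes_on_J (R : Type) [CommRing R] (n : ℕ)
    (α : ThetaF R (Finset.range n)) (hα : α ∈ Jsub R (Finset.range n))
    (β : GammaF R (Finset.range n)) :
    pairGT β α = 0 := by
  unfold pairGT
  apply Finset.sum_eq_zero
  intro G _
  have := pairL_J R G α hα
  have h0 : (α.sum fun T a => a * ((pairPT G.1 T.1 : ℤ) : R)) = 0 := this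
  have h1 : (α.sum fun T a => β G * a * ((pairPT G.1 T.1 : ℤ) : R)) =
      β G * (α.sum fun T a => a * ((pairPT G.1 T.1 : ℤ) : R)) := by
    rw [Finsupp.mul_sum]
    simp only [mul_assoc]
  exact h1.trans (by rw [h0, mul_zero])

end GTPairing
end
end

section
/- For every element β of the submodule I_n ⊆ Γ_n generated by Arnold combinations, symmetry combinations, and Graphs with doubled edges, and every α ∈ Θ_n, the configuration pairing vanishes: ⟨β, α⟩ = 0. -/
open scoped Classical

noncomputable section

namespace GTPairing

theorem leaves_exists (t : PTree) : ∃ a, a ∈ t.leaves := by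
  induction t with
  | leaf a => exact ⟨a, by simp [PTree.leaves]⟩
  | node l r hl hr =>
    obtain ⟨a, ha⟩ := hl
    exact ⟨a, by simp [PTree.leaves, ha]⟩

theorem nodes_leaves_subset (t v : PTree) (hv : v ∈ t.nodesList) :
    ∀ a ∈ v.leaves, a ∈ t.leaves := by
  induction t with
  | leaf a => simp [PTree.nodesList] at hv
  | node l r hl hr =>
    intro a ha
    simp only [PTree.nodesList, List.mem_append, List.mem_cons] at hv
    simp only [PTree.leaves, List.mem_append]
    rcases hv with hv | hv | hv
    · exact Or.inl (hl hv a ha)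
    · subst hv
      simpa [PTree.leaves] using ha
    · exact Or.inr (hr hv a ha)

theorem nodesList_nodup (t : PTree) (ht : t.leaves.Nodup) : t.nodesList.Nodup := by
  induction t with
  | leaf a => simp [PTree.nodesList]
  | node l r hl hr =>
    simp only [PTree.leaves, List.nodup_append] at ht
    obtain ⟨h1, h2, h3⟩ := ht
    have hlr : ∀ a, a ∈ l.leaves → a ∈ r.leaves → False := fun a ha hb => h3 a ha a hb rfl
    obtain ⟨x, hx⟩ := leaves_exists l
    obtain ⟨y, hy⟩ := leaves_exists r
    have hnl : PTree.node l r ∉ l.nodesList := fun h =>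
      hlr y (nodes_leaves_subset l _ h y (by simp [PTree.leaves, hy])) hy
    have hnr : PTree.node l r ∉ r.nodesList := fun h =>
      hlr x hx (nodes_leaves_subset r _ h x (by simp [PTree.leaves, hx]))
    simp only [PTree.nodesList, List.nodup_append, List.nodup_cons]
    refine ⟨hl h1, ⟨hnr, hr h2⟩, ?_⟩
    intro a ha b hb hab
    subst hab
    rcases List.mem_cons.1 hb with hb | hb
    · subst hb
      exact hnl ha
    · obtain ⟨z, hz⟩ := leaves_exists a
      exact hlr z (nodes_leaves_subset l _ ha z hz) (nodes_leaves_subset r _ hb z hz)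

/-- Two edges whose paths have the same nadir, traversed in opposite directions. -/
def Opp (t : PTree) (e e' : ℕ × ℕ) : Prop :=
  ∃ v b, t.nadir e.1 e.2 = some (v, b) ∧ t.nadir e'.1 e'.2 = some (v, !b)

theorem opp_swap (t : PTree) (ht : t.leaves.Nodup) (i j : ℕ) (hij : i ≠ j)
    (hi : i ∈ t.leaves) (hj : j ∈ t.leaves) : Opp t (i, j) (j, i) := by
  induction t with
  | leaf a => simp [PTree.leaves] at hi hj; omega
  | node l r hl hr =>
    simp only [PTree.leaves, List.nodup_append] at ht
    obtain ⟨h1, h2, h3⟩ := ht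
    have hlr : ∀ a, a ∈ l.leaves → a ∈ r.leaves → False := fun a ha hb => h3 a ha a hb rfl
    simp only [PTree.leaves, List.mem_append] at hi hj
    have ai := hlr i
    have aj := hlr j
    unfold Opp at *
    simp only [PTree.nadir]
    rcases hi with hi | hi <;> rcases hj with hj | hj <;> simp_all

theorem opp_triple (t : PTree) (ht : t.leaves.Nodup) (i j k : ℕ)
    (hij : i ≠ j) (hjk : j ≠ k) (hik : i ≠ k)
    (hi : i ∈ t.leaves) (hj : j ∈ t.leaves) (hk : k ∈ t.leaves) :
    Opp t (i, j) (j, k) ∨ Opp t (j, k) (k, i) ∨ Opp t (k, i) (i, j) := by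
  induction t with
  | leaf a => simp [PTree.leaves] at hi hj; omega
  | node l r hl hr =>
    simp only [PTree.leaves, List.nodup_append] at ht
    obtain ⟨h1, h2, h3⟩ := ht
    have hlr : ∀ a, a ∈ l.leaves → a ∈ r.leaves → False := fun a ha hb => h3 a ha a hb rfl
    simp only [PTree.leaves, List.mem_append] at hi hj hk
    have ai := hlr i
    have aj := hlr j
    have ak := hlr k
    unfold Opp at *
    simp only [PTree.nadir]
    rcases hi with hi | hi <;> rcases hj with hj | hj <;> rcases hk with hk | hk <;> simp_all

theorem pair_opp (t : PTree) (e e' : ℕ × ℕ) (h : Opp t e e') (E : Multiset (ℕ × ℕ)) :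
    pairPT (e ::ₘ E) t + pairPT (e' ::ₘ E) t = 0 := by
  obtain ⟨v, b, h1, h2⟩ := h
  have e1 : nadirFst t e = some v := by simp [nadirFst, h1]
  have e2 : nadirFst t e' = some v := by simp [nadirFst, h2]
  unfold pairPT
  rw [Multiset.map_cons, Multiset.map_cons, e1, e2]
  split_ifs
  · cases b <;> simp [Multiset.filter_cons, h1, h2, pow_add]
  · rfl

theorem pair_double (t : PTree) (ht : t.leaves.Nodup) (e e' : ℕ × ℕ)
    (h : nadirFst t e = nadirFst t e') (E : Multiset (ℕ × ℕ)) :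
    pairPT (e ::ₘ e' ::ₘ E) t = 0 := by
  unfold pairPT
  rw [if_neg]
  intro hE
  have hn : ((t.nodesList.map some : List (Option PTree)) : Multiset (Option PTree)).Nodup :=
    Multiset.coe_nodup.2 ((nodesList_nodup t ht).map (Option.some_injective _))
  rw [← hE, Multiset.map_cons, Multiset.map_cons, h] at hn
  simp at hn

theorem Opp.fst_eq {t : PTree} {e e' : ℕ × ℕ} (h : Opp t e e') :
    nadirFst t e = nadirFst t e' := by
  obtain ⟨v, b, h1, h2⟩ := h
  simp [nadirFst, h1, h2]

theorem pair_arnold (t : PTree) (ht : t.leaves.Nodup) (a b c : ℕ × ℕ) (h : Opp t a b)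
    (E : Multiset (ℕ × ℕ)) :
    pairPT (a ::ₘ b ::ₘ E) t + pairPT (b ::ₘ c ::ₘ E) t + pairPT (c ::ₘ a ::ₘ E) t = 0 := by
  have h1 := pair_double t ht a b h.fst_eq E
  have h2 := pair_opp t a b h (c ::ₘ E)
  rw [Multiset.cons_swap c a, h1]
  linarith

theorem pairGT_eq {R : Type} [CommRing R] {S : Finset ℕ} (β : GammaF R S) (α : ThetaF R S) :
    pairGT β α = Finsupp.linearCombination R
      (fun G : GraphOn S => α.sum fun T a => a * ((pairPT G.1 T.1 : ℤ) : R)) β := by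
  unfold pairGT
  rw [Finsupp.linearCombination_apply]
  refine Finsupp.sum_congr fun G _ => ?_
  rw [smul_eq_mul, Finsupp.mul_sum]
  refine Finsupp.sum_congr fun T _ => ?_
  ring

theorem mem_leaves {S : Finset ℕ} {t : PTree} (h : IsTreeOn S t) {a : ℕ} (ha : a ∈ S) :
    a ∈ t.leaves := by
  rw [← h.2] at ha
  simpa using ha

/-- the configuration pairing vanishes on the submodule `I_n ⊆ Γ_n`
generated by Arnold combinations, symmetry combinations, and Graphs with doubled
edges. -/
theorem pairing_vanishes_on_I (R : Type) [CommRing R] (n : ℕ)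
    (β : GammaF R (Finset.range n)) (hβ : β ∈ Isub R (Finset.range n))
    (α : ThetaF R (Finset.range n)) :
    pairGT β α = 0 := by
  rw [pairGT_eq]
  rw [← LinearMap.mem_ker]
  revert hβ
  revert β
  change Isub R (Finset.range n) ≤ _
  refine Submodule.span_le.2 ?_
  rintro x ((hx | hx) | hx)
  · obtain ⟨i, j, k, E, G₁, G₂, G₃, hij, hjk, hik, e1, e2, e3, rfl⟩ := hx
    have m1 := G₁.2.1 (i, j) (by rw [e1]; simp)
    have m2 := G₁.2.1 (j, k) (by rw [e1]; simp)
    have key : ∀ T : TreeOn (Finset.range n),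
        pairPT G₁.1 T.1 + pairPT G₂.1 T.1 + pairPT G₃.1 T.1 = 0 := by
      intro T
      rw [e1, e2, e3]
      rcases opp_triple T.1 T.2.1 i j k hij hjk hik (mem_leaves T.2 m1.1)
        (mem_leaves T.2 m1.2.1) (mem_leaves T.2 m2.2.1) with h | h | h
      · exact pair_arnold _ T.2.1 _ _ _ h E
      · have := pair_arnold _ T.2.1 _ _ (i, j) h E
        linarith
      · have := pair_arnold _ T.2.1 _ _ (j, k) h E
        linarith
    simp only [SetLike.mem_coe, LinearMap.mem_ker, map_add, Finsupp.linearCombination_single,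
      one_smul, Finsupp.sum]
    rw [← Finset.sum_add_distrib, ← Finset.sum_add_distrib]
    refine Finset.sum_eq_zero fun T _ => ?_
    rw [← mul_add, ← mul_add, ← Int.cast_add, ← Int.cast_add, key T, Int.cast_zero, mul_zero]
  · obtain ⟨i, j, E, G₁, G₂, e1, e2, rfl⟩ := hx
    have m1 := G₁.2.1 (i, j) (by rw [e1]; simp)
    have key : ∀ T : TreeOn (Finset.range n), pairPT G₁.1 T.1 + pairPT G₂.1 T.1 = 0 := by
      intro T
      rw [e1, e2]
      exact pair_opp _ _ _ (opp_swap T.1 T.2.1 i j m1.2.2 (mem_leaves T.2 m1.1)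
        (mem_leaves T.2 m1.2.1)) E
    simp only [SetLike.mem_coe, LinearMap.mem_ker, map_add, Finsupp.linearCombination_single,
      one_smul, Finsupp.sum]
    rw [← Finset.sum_add_distrib]
    refine Finset.sum_eq_zero fun T _ => ?_
    rw [← mul_add, ← Int.cast_add, key T, Int.cast_zero, mul_zero]
  · obtain ⟨i, j, E, G, e1, rfl⟩ := hx
    have m1 := G.2.1 (i, j) (by rcases e1 with e1 | e1 <;> rw [e1] <;> simp)
    have key : ∀ T : TreeOn (Finset.range n), pairPT G.1 T.1 = 0 := by
      intro T
      rcases e1 with e1 | e1 <;> rw [e1]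
      · exact pair_double _ T.2.1 _ _ rfl E
      · exact pair_double _ T.2.1 _ _ (opp_swap T.1 T.2.1 i j m1.2.2 (mem_leaves T.2 m1.1)
          (mem_leaves T.2 m1.2.1)).fst_eq E
    simp only [SetLike.mem_coe, LinearMap.mem_ker, Finsupp.linearCombination_single,
      one_smul, Finsupp.sum]
    refine Finset.sum_eq_zero fun T _ => ?_
    rw [key T, Int.cast_zero, mul_zero]

end GTPairing
end
end
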